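/- arXiv:2012.10960 — 5 statements merged into one kernel-verified Lean document; each statement's English description precedes it below -/
import Mathlib

section
/- Let 1 < p ≤ q and let g : (0,∞) → (0,∞) satisfy condition (g₁) with exponents p, q. Then for every ε > 0 and all a, b > 0 one has the Young-type inequality g(a)·b ≤ ε·g(a)·a + g(b/ε)·b. -/
/-- Condition (g₁): for `0 < v ≤ w`, `(w/v)^(p-1) ≤ g w / g v ≤ (w/v)^(q-1)`. -/
def CondG1 (g : ℝ → ℝ) (p q : ℝ) : Prop :=
  ∀ v w : ℝ, 0 < v → v ≤ w →
    (w / v) ^ (p - 1) ≤ g w / g v ∧ g w / g v ≤ (w / v) ^ (q - 1)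

theorem mul_le_mul_self_add_mul_self_of_monotoneOn {R : Type*} [Semiring R] [LinearOrder R]
    [IsOrderedRing R] {s : Set R} {g : R → R} (hg : MonotoneOn g s) {a t : R} (has : a ∈ s)
    (hts : t ∈ s) (ha : 0 ≤ a) (ht : 0 ≤ t) (hga : 0 ≤ g a) (hgt : 0 ≤ g t) :
    g a * t ≤ g a * a + g t * t := by
  rcases le_total t a with hta | hat
  · exact le_add_of_le_of_nonneg (mul_le_mul_of_nonneg_left hta hga) (mul_nonneg hgt ht)
  · exact le_add_of_nonneg_of_le (mul_nonneg hga ha)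
      (mul_le_mul_of_nonneg_right (hg has hts hat) ht)

theorem young_type_inequality_general {K : Type*} [Semifield K] [LinearOrder K]
    [IsStrictOrderedRing K] {g : K → K} (hmono : MonotoneOn g (Set.Ioi 0))
    (hnonneg : ∀ v : K, 0 < v → 0 ≤ g v) {ε a b : K} (hε : 0 < ε) (ha : 0 < a) (hb : 0 < b) :
    g a * b ≤ ε * g a * a + g (b / ε) * b := by
  have ht : 0 < b / ε := div_pos hb hε
  have unscaled : g a * (b / ε) ≤ g a * a + g (b / ε) * (b / ε) :=
    mul_le_mul_self_add_mul_self_of_monotoneOn hmono ha ht ha.le ht.le (hnonneg a ha)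
      (hnonneg (b / ε) ht)
  calc
    g a * b = ε * (g a * (b / ε)) := by field_simp
    _ ≤ ε * (g a * a + g (b / ε) * (b / ε)) := mul_le_mul_of_nonneg_left unscaled hε.le
    _ = ε * g a * a + g (b / ε) * b := by rw [mul_add, mul_left_comm ε (g (b / ε)),
        mul_div_cancel₀ b hε.ne', mul_assoc]

theorem CondG1.monotoneOn {g : ℝ → ℝ} {p q : ℝ} (hg : CondG1 g p q) (hp : 1 ≤ p)
    (hpos : ∀ v : ℝ, 0 < v → 0 < g v) : MonotoneOn g (Set.Ioi 0) := by
  intro v hv w _ hvw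
  have one_le_ratio : 1 ≤ g w / g v :=
    calc
      1 ≤ (w / v) ^ (p - 1) := Real.one_le_rpow ((one_le_div hv).2 hvw) (sub_nonneg.2 hp)
      _ ≤ g w / g v := (hg v w hv hvw).1
  exact (one_le_div (hpos v hv)).1 one_le_ratio

/-- Young-type inequality: `g(a)·b ≤ ε·g(a)·a + g(b/ε)·b`. -/
theorem young_type_inequality (p q : ℝ) (hp : 1 < p) (hpq : p ≤ q)
    (g : ℝ → ℝ) (hgpos : ∀ v : ℝ, 0 < v → 0 < g v)
    (hg1 : CondG1 g p q) :
    ∀ ε : ℝ, 0 < ε → ∀ a b : ℝ, 0 < a → 0 < b →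
      g a * b ≤ ε * g a * a + g (b / ε) * b :=
  fun _ hε _ _ ha hb => young_type_inequality_general (hg1.monotoneOn hp.le hgpos)
    (fun v hv => (hgpos v hv).le) hε ha hb
end

section
/- Let 1 < p < q, β ≥ 0, C > 0 and K > 0. Then there exist a constant γ > 0 and a radius r₀ ∈ (0,1) such that: for every r ∈ (0, r₀), every μ ≥ 1, and all c₁, c₂ ≥ 0 with |c₁ − c₂| ≤ C·r^(q−p)·μ, and for every v satisfying r ≤ v ≤ K·μ^(−1/(q−p))·(log(1/r))^(−β/(q−p)), one has g_{c₁}(v/r) ≤ γ·g_{c₂}(v/r). -/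
/-- `g_c(v) = v^(p-1) + c·v^(q-1)·(1 + log(1+v))^β`. -/
noncomputable def gc (p q β c v : ℝ) : ℝ :=
  v ^ (p - 1) + c * v ^ (q - 1) * (1 + Real.log (1 + v)) ^ β

/-!
Factoring out `w ^ (p - 1)`, replacing `c₂` by `c₁` costs `(c₁ - c₂) * w ^ (q - p)` times the
logarithmic weight. At `w = v / r` the factor `r ^ (q - p)` in the bound on `c₁ - c₂` cancels the
denominator of `w ^ (q - p)`, leaving `C * μ * v ^ (q - p)` times the weight. The weight is at most
a constant times `log (1 / r) ^ β`, because `log (1 + v / r) ≤ log (1 + v) + log (1 / r)`, and the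
upper bound on `v` is the one that makes `μ * v ^ (q - p) * log (1 / r) ^ β` bounded by
`K ^ (q - p)`.
-/

section RealEstimates

variable {a b r v x y β μ C K : ℝ}

lemma log_one_add_div_le (hr : 0 < r) (hr1 : r ≤ 1) (hv : 0 ≤ v) :
    Real.log (1 + v / r) ≤ Real.log (1 + v) + Real.log (1 / r) := by
  rw [← Real.log_mul (by positivity) (by positivity)]
  refine Real.log_le_log (by positivity) ?_
  have one_le_inv : 1 ≤ 1 / r := (one_le_div hr).mpr hr1
  calc 1 + v / r ≤ 1 / r + v / r := by gcongr
    _ = (1 + v) * (1 / r) := by ring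

lemma one_le_log_one_div (hr : 0 < r) (hr_exp : r ≤ Real.exp (-1)) : 1 ≤ Real.log (1 / r) := by
  rw [one_div, Real.log_inv, le_neg]
  exact (Real.log_le_iff_le_exp hr).mpr hr_exp

lemma one_add_log_one_add_div_le_mul_log (hr : 0 < r) (hr_exp : r ≤ Real.exp (-1))
    (hv : 0 ≤ v) (hvK : v ≤ K) :
    1 + Real.log (1 + v / r) ≤ (2 + Real.log (1 + K)) * Real.log (1 / r) := by
  have hL : 1 ≤ Real.log (1 / r) := one_le_log_one_div hr hr_exp
  have hr1 : r ≤ 1 := hr_exp.trans (Real.exp_le_one_iff.mpr (by norm_num))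
  have hlogK : 0 ≤ Real.log (1 + K) := Real.log_nonneg (by linarith)
  calc 1 + Real.log (1 + v / r)
      ≤ 1 + (Real.log (1 + v) + Real.log (1 / r)) := by
        gcongr
        exact log_one_add_div_le hr hr1 hv
    _ ≤ 1 + (Real.log (1 + K) + Real.log (1 / r)) := by gcongr
    _ ≤ (2 + Real.log (1 + K)) * Real.log (1 / r) := by
        linarith [mul_le_mul_of_nonneg_left hL hlogK]

lemma mul_rpow_neg_mul_rpow_neg_le (ha : 0 ≤ a) (hb : 0 ≤ b) (hK : 0 ≤ K) (hx : 1 ≤ x)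
    (hy : 1 ≤ y) : K * x ^ (-a) * y ^ (-b) ≤ K := by
  have hx' : x ^ (-a) ≤ 1 := Real.rpow_le_one_of_one_le_of_nonpos hx (neg_nonpos.mpr ha)
  have hy' : y ^ (-b) ≤ 1 := Real.rpow_le_one_of_one_le_of_nonpos hy (neg_nonpos.mpr hb)
  calc K * x ^ (-a) * y ^ (-b) ≤ K * 1 * 1 := by gcongr
    _ = K := by ring

lemma mul_rpow_mul_rpow_le_of_le_mul_rpow_neg (ha : 0 < a) (hK : 0 ≤ K) (hx : 0 < x) (hy : 0 < y)
    (hv : 0 ≤ v) (h : v ≤ K * x ^ (-(1 / a)) * y ^ (-(b / a))) :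
    x * v ^ a * y ^ b ≤ K ^ a := by
  have hxa : (x ^ (-(1 / a))) ^ a = x⁻¹ := by
    rw [← Real.rpow_mul hx.le, neg_mul, div_mul_cancel₀ _ ha.ne', Real.rpow_neg_one]
  have hya : (y ^ (-(b / a))) ^ a = (y ^ b)⁻¹ := by
    rw [← Real.rpow_mul hy.le, neg_mul, div_mul_cancel₀ _ ha.ne', Real.rpow_neg hy.le]
  calc x * v ^ a * y ^ b
      ≤ x * (K * x ^ (-(1 / a)) * y ^ (-(b / a))) ^ a * y ^ b := by gcongr
    _ = x * (K ^ a * x⁻¹ * (y ^ b)⁻¹) * y ^ b := by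
        rw [Real.mul_rpow (by positivity) (by positivity), Real.mul_rpow hK (by positivity),
          hxa, hya]
    _ = K ^ a := by field_simp

lemma mul_rpow_div_mul_log_rpow_le (ha : 0 < a) (hβ : 0 ≤ β) (hC : 0 ≤ C) (hK : 0 ≤ K)
    (hr : 0 < r) (hr_exp : r ≤ Real.exp (-1)) (hμ : 1 ≤ μ) (hv : 0 ≤ v)
    (hv_le : v ≤ K * μ ^ (-(1 / a)) * Real.log (1 / r) ^ (-(β / a))) :
    C * r ^ a * μ * ((v / r) ^ a * (1 + Real.log (1 + v / r)) ^ β) ≤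
      C * K ^ a * (2 + Real.log (1 + K)) ^ β := by
  set L := Real.log (1 / r)
  set M := 2 + Real.log (1 + K)
  have hL : 1 ≤ L := one_le_log_one_div hr hr_exp
  have hM : 0 ≤ M := add_nonneg zero_le_two (Real.log_nonneg (by linarith))
  have hvK : v ≤ K :=
    hv_le.trans (mul_rpow_neg_mul_rpow_neg_le (by positivity) (by positivity) hK hμ hL)
  have hlog : 0 ≤ Real.log (1 + v / r) :=
    Real.log_nonneg (le_add_of_nonneg_right (by positivity))
  have hweight : (1 + Real.log (1 + v / r)) ^ β ≤ M ^ β * L ^ β := by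
    rw [← Real.mul_rpow hM (by positivity)]
    gcongr
    exact one_add_log_one_add_div_le_mul_log hr hr_exp hv hvK
  have hcancel : r ^ a * (v / r) ^ a = v ^ a := by
    rw [← Real.mul_rpow hr.le (by positivity), mul_div_cancel₀ _ hr.ne']
  calc C * r ^ a * μ * ((v / r) ^ a * (1 + Real.log (1 + v / r)) ^ β)
      ≤ C * r ^ a * μ * ((v / r) ^ a * (M ^ β * L ^ β)) := by gcongr
    _ = C * (μ * (r ^ a * (v / r) ^ a) * L ^ β) * M ^ β := by ring
    _ ≤ C * K ^ a * M ^ β := by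
        rw [hcancel]
        gcongr
        exact mul_rpow_mul_rpow_le_of_le_mul_rpow_neg ha hK (by positivity) (by positivity) hv hv_le

end RealEstimates

section Comparison

variable {p q β c c₁ c₂ d B w : ℝ}

lemma gc_eq_rpow_mul (hw : 0 < w) :
    gc p q β c w =
      w ^ (p - 1) * (1 + c * (w ^ (q - p) * (1 + Real.log (1 + w)) ^ β)) := by
  have hsplit : w ^ (q - 1) = w ^ (p - 1) * w ^ (q - p) := by
    rw [← Real.rpow_add hw]
    congr 1
    ring
  rw [gc, hsplit]
  ring

lemma gc_le_one_add_mul_gc (hw : 0 < w) (hc₂ : 0 ≤ c₂) (hB : 0 ≤ B) (hc : c₁ ≤ c₂ + d)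
    (hd : d * (w ^ (q - p) * (1 + Real.log (1 + w)) ^ β) ≤ B) :
    gc p q β c₁ w ≤ (1 + B) * gc p q β c₂ w := by
  have hlog : 0 ≤ Real.log (1 + w) := Real.log_nonneg (by linarith)
  rw [gc_eq_rpow_mul hw, gc_eq_rpow_mul hw, mul_left_comm (1 + B)]
  have hwp : 0 ≤ w ^ (p - 1) := by positivity
  refine mul_le_mul_of_nonneg_left ?_ hwp
  set W := w ^ (q - p) * (1 + Real.log (1 + w)) ^ β
  have hW : 0 ≤ W := by positivity
  have hcW : 0 ≤ c₂ * W := mul_nonneg hc₂ hW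
  calc 1 + c₁ * W ≤ 1 + (c₂ + d) * W := by gcongr
    _ = 1 + c₂ * W + d * W := by ring
    _ ≤ 1 + c₂ * W + B := by gcongr
    _ ≤ (1 + B) * (1 + c₂ * W) := by linarith [mul_nonneg hB hcW]

end Comparison

theorem gc_nonlog_bound_general {p q β C K r μ c₁ c₂ v : ℝ} (hpq : p < q) (hβ : 0 ≤ β)
    (hC : 0 ≤ C) (hK : 0 ≤ K) (hr : 0 < r) (hr_exp : r ≤ Real.exp (-1)) (hμ : 1 ≤ μ)
    (hc₂ : 0 ≤ c₂) (hc : c₁ ≤ c₂ + C * r ^ (q - p) * μ) (hv : 0 < v)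
    (hv_le : v ≤ K * μ ^ (-(1 / (q - p))) * (Real.log (1 / r)) ^ (-(β / (q - p)))) :
    gc p q β c₁ (v / r) ≤
      (1 + C * K ^ (q - p) * (2 + Real.log (1 + K)) ^ β) * gc p q β c₂ (v / r) := by
  have hlogK : 0 ≤ Real.log (1 + K) := Real.log_nonneg (by linarith)
  exact gc_le_one_add_mul_gc (by positivity) hc₂ (by positivity) hc
    (mul_rpow_div_mul_log_rpow_le (sub_pos.mpr hpq) hβ hC hK hr hr_exp hμ hv.le hv_le)

theorem gc_nonlog_bound (p q β C K : ℝ)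
    (hp : 1 < p) (hpq : p < q) (hβ : 0 ≤ β) (hC : 0 < C) (hK : 0 < K) :
    ∃ γ : ℝ, 0 < γ ∧ ∃ r₀ : ℝ, r₀ ∈ Set.Ioo (0 : ℝ) 1 ∧
      ∀ r : ℝ, r ∈ Set.Ioo (0 : ℝ) r₀ → ∀ μ : ℝ, 1 ≤ μ →
        ∀ c₁ c₂ : ℝ, 0 ≤ c₁ → 0 ≤ c₂ → |c₁ - c₂| ≤ C * r ^ (q - p) * μ →
          ∀ v : ℝ, r ≤ v →
            v ≤ K * μ ^ (-(1 / (q - p))) * (Real.log (1 / r)) ^ (-(β / (q - p))) →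
            gc p q β c₁ (v / r) ≤ γ * gc p q β c₂ (v / r) := by
  have hlogK : 0 ≤ Real.log (1 + K) := Real.log_nonneg (by linarith)
  refine ⟨1 + C * K ^ (q - p) * (2 + Real.log (1 + K)) ^ β, by positivity, Real.exp (-1),
    ⟨Real.exp_pos _, Real.exp_lt_one_iff.mpr (by norm_num)⟩, ?_⟩
  rintro r ⟨hr, hr_exp⟩ μ hμ c₁ c₂ - hc₂ hc v hrv hv
  exact gc_nonlog_bound_general hpq hβ hC.le hK.le hr hr_exp.le hμ hc₂
    (sub_le_iff_le_add'.mp (le_of_abs_le hc)) (hr.trans_le hrv) hv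
end

section
/- For every δ₀ ∈ (0,1) and every C ≥ 1 there exists a constant γ > 0, depending only on δ₀ and C, with the following property: let ρ > 0 and let λ : ℝ → ℝ be a function with values in (0,1] on (0,2ρ), non-decreasing on (0,2ρ), and satisfying λ(r) ≤ (3/2)^(1−δ₀)·λ(r/2) for every r ∈ (0,2ρ). If ω : ℕ → ℝ is a non-negative sequence satisfying the recursion ω(i+1) ≤ (1 − λ(2^(−i)·ρ)/C)·ω(i) + C·2^(−i)·ρ/λ(2^(−i)·ρ) for every i ∈ ℕ, then for every j ∈ ℕ one has ω(j) ≤ ω(0)·exp(−(1/C)·∑_{i=0}^{j−1} λ(2^(−i)·ρ)) + γ·ρ/λ(ρ). -/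
/-!
Write `lᵢ = λ(2⁻ⁱρ)` and `bᵢ = C 2⁻ⁱρ / lᵢ`. Unrolling the recursion, the homogeneous part decays
like `∏ (1 - lᵢ/C) ≤ exp (-∑ lᵢ/C)`, and the errors contribute at most `∑ bᵢ` because every factor
is at most `1`. When the scale is halved, `λ` drops by at most a factor `K < 2` while the radius
drops by exactly `2`, so `bᵢ₊₁ ≤ (K/2) bᵢ`, and the errors sum to at most `b₀ / (1 - K/2)`.
-/

open Finset Real

section Sequences

variable {u a b : ℕ → ℝ} {q : ℝ}

theorem le_mul_exp_neg_sum_add_sum (hu₀ : 0 ≤ u 0) (ha : ∀ n, a n ∈ Set.Icc 0 1)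
    (hb : ∀ n, 0 ≤ b n) (hu : ∀ n, u (n + 1) ≤ (1 - a n) * u n + b n) (n : ℕ) :
    u n ≤ u 0 * exp (-∑ i ∈ range n, a i) + ∑ i ∈ range n, b i := by
  have factor_nonneg (i : ℕ) : 0 ≤ 1 - a i := sub_nonneg.2 (ha i).2
  have factor_le_one (i : ℕ) : 1 - a i ≤ 1 := sub_le_self 1 (ha i).1
  have prod_le_exp : ∏ i ∈ range n, (1 - a i) ≤ exp (-∑ i ∈ range n, a i) := by
    rw [← sum_neg_distrib, exp_sum]
    exact prod_le_prod (fun i _ ↦ factor_nonneg i) fun i _ ↦ one_sub_le_exp_neg (a i)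
  calc
    u n ≤ u 0 * ∏ i ∈ range n, (1 - a i) +
        ∑ k ∈ range n, b k * ∏ i ∈ Ico (k + 1) n, (1 - a i) := by
      simpa only [range_eq_Ico] using
        discrete_gronwall_prod_general (fun i _ ↦ hu i) (fun i _ ↦ factor_nonneg i) n.zero_le
    _ ≤ u 0 * exp (-∑ i ∈ range n, a i) + ∑ k ∈ range n, b k := by
      gcongr with k _
      exact mul_le_of_le_one_right (hb k)
        (prod_le_one (fun i _ ↦ factor_nonneg i) fun i _ ↦ factor_le_one i)

theorem sum_range_le_div_one_sub_of_le_mul (hq₀ : 0 ≤ q) (hq₁ : q < 1) (hb₀ : 0 ≤ b 0)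
    (hb : ∀ n, b (n + 1) ≤ q * b n) (n : ℕ) :
    ∑ i ∈ range n, b i ≤ b 0 / (1 - q) :=
  calc
    ∑ i ∈ range n, b i ≤ ∑ i ∈ range n, q ^ i * b 0 :=
      sum_le_sum fun i _ ↦ le_geom hq₀ i fun k _ ↦ hb k
    _ = b 0 * ∑ i ∈ range n, q ^ i := by rw [← sum_mul, mul_comm]
    _ ≤ b 0 * (1 / (1 - q)) := by
      gcongr
      simpa only [range_eq_Ico, pow_zero] using
        geom_sum_Ico_le_of_lt_one (m := 0) (n := n) hq₀ hq₁
    _ = b 0 / (1 - q) := mul_one_div _ _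

theorem le_mul_exp_neg_sum_add_div_one_sub (hu₀ : 0 ≤ u 0) (ha : ∀ n, a n ∈ Set.Icc 0 1)
    (hb₀ : ∀ n, 0 ≤ b n) (hq₀ : 0 ≤ q) (hq₁ : q < 1) (hb : ∀ n, b (n + 1) ≤ q * b n)
    (hu : ∀ n, u (n + 1) ≤ (1 - a n) * u n + b n) (n : ℕ) :
    u n ≤ u 0 * exp (-∑ i ∈ range n, a i) + b 0 / (1 - q) :=
  (le_mul_exp_neg_sum_add_sum hu₀ ha hb₀ hu n).trans <| by
    gcongr
    exact sum_range_le_div_one_sub_of_le_mul hq₀ hq₁ (hb₀ 0) hb n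

end Sequences

theorem two_rpow_neg_natCast_mul_mem_Ioc {ρ : ℝ} (hρ : 0 < ρ) (i : ℕ) :
    (2 : ℝ) ^ (-(i : ℝ)) * ρ ∈ Set.Ioc 0 ρ :=
  ⟨by positivity, mul_le_of_le_one_left hρ.le <|
    rpow_le_one_of_one_le_of_nonpos one_le_two (neg_nonpos.2 i.cast_nonneg)⟩

theorem two_rpow_neg_natCast_succ_mul (ρ : ℝ) (i : ℕ) :
    (2 : ℝ) ^ (-((i + 1 : ℕ) : ℝ)) * ρ = (2 : ℝ) ^ (-(i : ℝ)) * ρ / 2 := by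
  rw [Nat.cast_succ, neg_add', rpow_sub_one two_ne_zero]
  ring

theorem mul_half_div_le_half_mul {C K r x y : ℝ} (hC : 0 ≤ C) (hr : 0 ≤ r) (hx : 0 < x)
    (hy : 0 < y) (hxy : x ≤ K * y) :
    C * (r / 2) / y ≤ K / 2 * (C * r / x) := by
  have inv_le : 1 / y ≤ K / x := by rwa [div_le_div_iff₀ hy hx, one_mul]
  calc
    C * (r / 2) / y = C * r / 2 * (1 / y) := by ring
    _ ≤ C * r / 2 * (K / x) := by gcongr
    _ = K / 2 * (C * r / x) := by ring

theorem oscillation_iteration_estimate_general {C K ρ : ℝ} (hK : K < 2) (hρ : 0 < ρ)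
    {lam : ℝ → ℝ} (hlam : ∀ r ∈ Set.Ioc 0 ρ, lam r ∈ Set.Ioc 0 C)
    (hhalf : ∀ r ∈ Set.Ioc 0 ρ, lam r ≤ K * lam (r / 2)) {ω : ℕ → ℝ} (hω₀ : 0 ≤ ω 0)
    (hω : ∀ i : ℕ, ω (i + 1) ≤
      (1 - lam ((2 : ℝ) ^ (-(i : ℝ)) * ρ) / C) * ω i +
        C * ((2 : ℝ) ^ (-(i : ℝ)) * ρ) / lam ((2 : ℝ) ^ (-(i : ℝ)) * ρ)) (j : ℕ) :
    ω j ≤ ω 0 * exp (-(1 / C) * ∑ i ∈ range j, lam ((2 : ℝ) ^ (-(i : ℝ)) * ρ)) +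
      2 * C / (2 - K) * ρ / lam ρ := by
  let r (i : ℕ) : ℝ := (2 : ℝ) ^ (-(i : ℝ)) * ρ
  have r_mem (i : ℕ) : r i ∈ Set.Ioc 0 ρ := two_rpow_neg_natCast_mul_mem_Ioc hρ i
  have r_zero : r 0 = ρ := by simp [r]
  have r_succ (i : ℕ) : r (i + 1) = r i / 2 := two_rpow_neg_natCast_succ_mul ρ i
  have lam_pos (i : ℕ) : 0 < lam (r i) := (hlam _ (r_mem i)).1
  have lam_half (i : ℕ) : lam (r i) ≤ K * lam (r (i + 1)) := r_succ i ▸ hhalf _ (r_mem i)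
  have hC : 0 < C := (lam_pos 0).trans_le (hlam _ (r_mem 0)).2
  have K_pos : 0 < K := pos_of_mul_pos_left ((lam_pos 0).trans_le (lam_half 0)) (lam_pos 1).le
  have rate_mem (i : ℕ) : lam (r i) / C ∈ Set.Icc 0 1 :=
    ⟨(div_pos (lam_pos i) hC).le, (div_le_one hC).2 (hlam _ (r_mem i)).2⟩
  have error_nonneg (i : ℕ) : 0 ≤ C * r i / lam (r i) :=
    div_nonneg (mul_nonneg hC.le (r_mem i).1.le) (lam_pos i).le
  have error_succ_le (i : ℕ) :
      C * r (i + 1) / lam (r (i + 1)) ≤ K / 2 * (C * r i / lam (r i)) := by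
    simpa only [r_succ] using mul_half_div_le_half_mul hC.le (r_mem i).1.le (lam_pos i)
      (lam_pos (i + 1)) (lam_half i)
  have exponent : -∑ i ∈ range j, lam (r i) / C = -(1 / C) * ∑ i ∈ range j, lam (r i) := by
    rw [← sum_div]
    ring
  have error_sum : C * ρ / lam ρ / (1 - K / 2) = 2 * C / (2 - K) * ρ / lam ρ := by
    rw [one_sub_div two_ne_zero, div_div_eq_mul_div]
    ring
  simpa only [exponent, r_zero, error_sum] using
    le_mul_exp_neg_sum_add_div_one_sub hω₀ rate_mem error_nonneg (half_pos K_pos).le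
      ((div_lt_one two_pos).2 hK) error_succ_le hω j

theorem oscillation_iteration_estimate (δ₀ C : ℝ)
    (hδ₀ : δ₀ ∈ Set.Ioo (0 : ℝ) 1) (hC : 1 ≤ C) :
    ∃ γ : ℝ, 0 < γ ∧
      ∀ ρ : ℝ, 0 < ρ → ∀ lam : ℝ → ℝ,
        (∀ r : ℝ, r ∈ Set.Ioo 0 (2 * ρ) → lam r ∈ Set.Ioc (0 : ℝ) 1) →
        (∀ r s : ℝ, 0 < r → r ≤ s → s < 2 * ρ → lam r ≤ lam s) →
        (∀ r : ℝ, r ∈ Set.Ioo 0 (2 * ρ) → lam r ≤ (3 / 2 : ℝ) ^ (1 - δ₀) * lam (r / 2)) →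
        ∀ ω : ℕ → ℝ, (∀ i : ℕ, 0 ≤ ω i) →
          (∀ i : ℕ, ω (i + 1) ≤
            (1 - lam ((2 : ℝ) ^ (-(i : ℝ)) * ρ) / C) * ω i +
              C * ((2 : ℝ) ^ (-(i : ℝ)) * ρ) / lam ((2 : ℝ) ^ (-(i : ℝ)) * ρ)) →
          ∀ j : ℕ, ω j ≤
            ω 0 * Real.exp (-(1 / C) * ∑ i ∈ Finset.range j, lam ((2 : ℝ) ^ (-(i : ℝ)) * ρ)) +
              γ * ρ / lam ρ := by
  have hK : (3 / 2 : ℝ) ^ (1 - δ₀) < 2 :=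
    (rpow_lt_self_of_one_lt (by norm_num) (sub_lt_self 1 hδ₀.1)).trans (by norm_num)
  refine ⟨2 * C / (2 - (3 / 2 : ℝ) ^ (1 - δ₀)), div_pos (by linarith) (sub_pos.2 hK), ?_⟩
  intro ρ hρ lam hlam _ hhalf ω hω hrec
  have Ioc_subset : Set.Ioc 0 ρ ⊆ Set.Ioo 0 (2 * ρ) := Set.Ioc_subset_Ioo_right (by linarith)
  exact oscillation_iteration_estimate_general hK hρ
    (fun r hr ↦ Set.Ioc_subset_Ioc_right hC (hlam r (Ioc_subset hr)))
    (fun r hr ↦ hhalf r (Ioc_subset hr)) (hω 0) hrec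
end

section
/- Let 1 < p ≤ q and let g : (0,∞) → (0,∞) satisfy condition (g₁) with exponents p, q. Then for every v > 0 the function g is Lebesgue integrable on the interval (0, v), and (v·g(v))/q ≤ ∫_{(0,v)} g(t) dt ≤ (v·g(v))/p. -/
/-!
Condition (g₁) says that `g t / t ^ (p - 1)` is nondecreasing and `g t / t ^ (q - 1)` is
nonincreasing on `(0, ∞)`. Hence on `(0, v)` the function `g` lies between the multiples of
`t ^ (q - 1)` and `t ^ (p - 1)` that agree with it at `v`, and these have integrals `v * g v / q`
and `v * g v / p`. Measurability of `g` comes for free from the monotonicity of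
`g t / t ^ (p - 1)`.
-/

open MeasureTheory

open Set

section RpowComparison

variable {f : ℝ → ℝ} {s v : ℝ}

theorem integrableOn_Ioo_zero_const_mul_rpow (hs : -1 < s) (c v : ℝ) :
    IntegrableOn (fun t => c * t ^ s) (Ioo 0 v) :=
  ((intervalIntegral.intervalIntegrable_rpow' hs).1.mono_set Ioo_subset_Ioc_self).const_mul c

theorem integral_Ioo_zero_div_rpow_mul_rpow (hs : -1 < s) (hv : 0 < v) (c : ℝ) :
    ∫ t in Ioo 0 v, c / v ^ s * t ^ s = v * c / (s + 1) := by
  have hvs : v ^ s ≠ 0 := (Real.rpow_pos_of_pos hv s).ne'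
  rw [integral_const_mul, ← integral_Ioc_eq_integral_Ioo,
    ← intervalIntegral.integral_of_le hv.le, integral_rpow (.inl hs),
    Real.zero_rpow (by linarith), Real.rpow_add_one hv.ne']
  field_simp
  ring

theorem le_div_rpow_mul_rpow_of_monotoneOn (hf : MonotoneOn (fun t => f t / t ^ s) (Ioc 0 v))
    {t : ℝ} (ht : t ∈ Ioc 0 v) : f t ≤ f v / v ^ s * t ^ s :=
  (div_le_iff₀ (Real.rpow_pos_of_pos ht.1 s)).1 <|
    hf ht (right_mem_Ioc.2 (ht.1.trans_le ht.2)) ht.2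

theorem div_rpow_mul_rpow_le_of_antitoneOn (hf : AntitoneOn (fun t => f t / t ^ s) (Ioc 0 v))
    {t : ℝ} (ht : t ∈ Ioc 0 v) : f v / v ^ s * t ^ s ≤ f t :=
  (le_div_iff₀ (Real.rpow_pos_of_pos ht.1 s)).1 <|
    hf ht (right_mem_Ioc.2 (ht.1.trans_le ht.2)) ht.2

theorem aemeasurable_restrict_of_monotoneOn_div_rpow {μ : Measure ℝ} {S : Set ℝ}
    (hS : MeasurableSet S) (hS₀ : S ⊆ Ioi 0) (hf : MonotoneOn (fun t => f t / t ^ s) S) :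
    AEMeasurable f (μ.restrict S) := by
  have hquot : AEMeasurable (fun t => f t / t ^ s) (μ.restrict S) :=
    aemeasurable_restrict_of_monotoneOn hS hf
  refine (hquot.mul (measurable_id.pow_const s).aemeasurable).congr ?_
  filter_upwards [ae_restrict_mem hS] with t ht
  exact div_mul_cancel₀ (f t) (Real.rpow_pos_of_pos (hS₀ ht) s).ne'

theorem integrableOn_Ioo_of_monotoneOn_div_rpow (hs : -1 < s) (hf₀ : ∀ t ∈ Ioo 0 v, 0 ≤ f t)
    (hf : MonotoneOn (fun t => f t / t ^ s) (Ioc 0 v)) : IntegrableOn f (Ioo 0 v) := by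
  have hmeas : AEMeasurable f (volume.restrict (Ioo 0 v)) :=
    aemeasurable_restrict_of_monotoneOn_div_rpow measurableSet_Ioo Ioo_subset_Ioi_self
      (hf.mono Ioo_subset_Ioc_self)
  refine (integrableOn_Ioo_zero_const_mul_rpow hs (f v / v ^ s) v).mono'
    hmeas.aestronglyMeasurable ?_
  filter_upwards [ae_restrict_mem measurableSet_Ioo] with t ht
  rw [Real.norm_of_nonneg (hf₀ t ht)]
  exact le_div_rpow_mul_rpow_of_monotoneOn hf (Ioo_subset_Ioc_self ht)

theorem integral_Ioo_le_of_monotoneOn_div_rpow (hs : -1 < s) (hv : 0 < v)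
    (hint : IntegrableOn f (Ioo 0 v)) (hf : MonotoneOn (fun t => f t / t ^ s) (Ioc 0 v)) :
    ∫ t in Ioo 0 v, f t ≤ v * f v / (s + 1) := by
  rw [← integral_Ioo_zero_div_rpow_mul_rpow hs hv]
  exact setIntegral_mono_on hint (integrableOn_Ioo_zero_const_mul_rpow hs _ v) measurableSet_Ioo
    fun t ht => le_div_rpow_mul_rpow_of_monotoneOn hf (Ioo_subset_Ioc_self ht)

theorem le_integral_Ioo_of_antitoneOn_div_rpow (hs : -1 < s) (hv : 0 < v)
    (hint : IntegrableOn f (Ioo 0 v)) (hf : AntitoneOn (fun t => f t / t ^ s) (Ioc 0 v)) :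
    v * f v / (s + 1) ≤ ∫ t in Ioo 0 v, f t := by
  rw [← integral_Ioo_zero_div_rpow_mul_rpow hs hv]
  exact setIntegral_mono_on (integrableOn_Ioo_zero_const_mul_rpow hs _ v) hint measurableSet_Ioo
    fun t ht => div_rpow_mul_rpow_le_of_antitoneOn hf (Ioo_subset_Ioc_self ht)

end RpowComparison

namespace CondG1

variable {g : ℝ → ℝ} {p q : ℝ}

theorem exponent_le (hg : CondG1 g p q) : p ≤ q := by
  obtain ⟨hlower, hupper⟩ := hg 1 2 one_pos one_le_two
  have hpow : (2 : ℝ) ^ (p - 1) ≤ 2 ^ (q - 1) := by simpa using hlower.trans hupper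
  simpa using (Real.rpow_le_rpow_left_iff one_lt_two).1 hpow

theorem monotoneOn_div_rpow (hg : CondG1 g p q) (hpos : ∀ t : ℝ, 0 < t → 0 < g t) :
    MonotoneOn (fun t => g t / t ^ (p - 1)) (Ioi 0) := by
  intro t (ht : 0 < t) w (hw : 0 < w) htw
  have htp := Real.rpow_pos_of_pos ht (p - 1)
  have hwp := Real.rpow_pos_of_pos hw (p - 1)
  have hratio := (hg t w ht htw).1
  rw [Real.div_rpow hw.le ht.le, div_le_div_iff₀ htp (hpos t ht)] at hratio
  rwa [div_le_div_iff₀ htp hwp, mul_comm (g t)]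

theorem antitoneOn_div_rpow (hg : CondG1 g p q) (hpos : ∀ t : ℝ, 0 < t → 0 < g t) :
    AntitoneOn (fun t => g t / t ^ (q - 1)) (Ioi 0) := by
  intro t (ht : 0 < t) w (hw : 0 < w) htw
  have htq := Real.rpow_pos_of_pos ht (q - 1)
  have hwq := Real.rpow_pos_of_pos hw (q - 1)
  have hratio := (hg t w ht htw).2
  rw [Real.div_rpow hw.le ht.le, div_le_div_iff₀ (hpos t ht) htq] at hratio
  rwa [div_le_div_iff₀ hwq htq, mul_comm (g t)]

end CondG1

theorem primitive_of_g_comparable_general (p q : ℝ) (hp : 0 < p) (g : ℝ → ℝ)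
    (hgpos : ∀ v : ℝ, 0 < v → 0 < g v) (hg1 : CondG1 g p q) :
    ∀ v : ℝ, 0 < v →
      IntegrableOn g (Ioo 0 v) ∧
      v * g v / q ≤ ∫ t in Ioo (0 : ℝ) v, g t ∧
      (∫ t in Ioo (0 : ℝ) v, g t) ≤ v * g v / p := by
  intro v hv
  have hp' : -1 < p - 1 := by linarith
  have hq' : -1 < q - 1 := by linarith [hg1.exponent_le]
  have hmono := (hg1.monotoneOn_div_rpow hgpos).mono (Ioc_subset_Ioi_self : Ioc 0 v ⊆ Ioi 0)
  have hanti := (hg1.antitoneOn_div_rpow hgpos).mono (Ioc_subset_Ioi_self : Ioc 0 v ⊆ Ioi 0)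
  have hint : IntegrableOn g (Ioo 0 v) :=
    integrableOn_Ioo_of_monotoneOn_div_rpow hp' (fun t ht => (hgpos t ht.1).le) hmono
  refine ⟨hint, ?_, ?_⟩
  · simpa only [sub_add_cancel] using le_integral_Ioo_of_antitoneOn_div_rpow hq' hv hint hanti
  · simpa only [sub_add_cancel] using integral_Ioo_le_of_monotoneOn_div_rpow hp' hv hint hmono

theorem primitive_of_g_comparable (p q : ℝ) (hp : 1 < p) (hpq : p ≤ q)
    (g : ℝ → ℝ) (hgpos : ∀ v : ℝ, 0 < v → 0 < g v) (hg1 : CondG1 g p q) :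
    ∀ v : ℝ, 0 < v →
      IntegrableOn g (Set.Ioo 0 v) ∧
      v * g v / q ≤ ∫ t in Set.Ioo (0 : ℝ) v, g t ∧
      (∫ t in Set.Ioo (0 : ℝ) v, g t) ≤ v * g v / p :=
  primitive_of_g_comparable_general p q (one_pos.trans hp) g hgpos hg1
end

section
/- Let p > 1 and b ≥ 0. Then the function g_b satisfies the two-sided ratio bounds of condition (g₁) with exponents p and p+1: for all real numbers 0 < v ≤ w one has (w/v)^(p−1)·g_b(v) ≤ g_b(w) ≤ (w/v)^p·g_b(v). -/
/-- `g_b(v) = v^(p-1)·(1 + log(1 + b·v))`. -/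
noncomputable def gb (p b v : ℝ) : ℝ := v ^ (p - 1) * (1 + Real.log (1 + b * v))

/-!
The factor `v ^ (p - 1)` scales exactly, so only `L v = 1 + log (1 + b * v)` matters. It is
increasing, which gives the lower bound. For the upper bound, write `w = t * v` with `1 ≤ t`:
Bernoulli's inequality `1 + t * x ≤ (1 + x) ^ t` at `x = b * v` gives `L w ≤ t * L v`.
-/

theorem log_one_add_mul_le_mul_log_one_add {t x : ℝ} (ht : 1 ≤ t) (hx : 0 < 1 + t * x) :
    Real.log (1 + t * x) ≤ t * Real.log (1 + x) := by
  have hx' : 0 < 1 + x := by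
    by_contra! h
    nlinarith
  calc Real.log (1 + t * x)
      ≤ Real.log ((1 + x) ^ t) :=
        Real.log_le_log hx (one_add_mul_self_le_rpow_one_add (by linarith) ht)
    _ = t * Real.log (1 + x) := Real.log_rpow hx' t

theorem one_add_log_one_add_mul_le_div_mul {b v w : ℝ} (hb : 0 ≤ b) (hv : 0 < v) (hvw : v ≤ w) :
    1 + Real.log (1 + b * w) ≤ w / v * (1 + Real.log (1 + b * v)) := by
  have hw : 0 < w := hv.trans_le hvw
  have ht : 1 ≤ w / v := (one_le_div hv).2 hvw
  have hscale : w / v * (b * v) = b * w := by field_simp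
  have hlog : Real.log (1 + b * w) ≤ w / v * Real.log (1 + b * v) := by
    rw [← hscale]
    exact log_one_add_mul_le_mul_log_one_add ht (by positivity)
  linarith

theorem div_rpow_mul_rpow {v w : ℝ} (hv : 0 < v) (hw : 0 ≤ w) (a : ℝ) :
    (w / v) ^ a * v ^ a = w ^ a := by
  rw [← Real.mul_rpow (by positivity) hv.le, div_mul_cancel₀ w hv.ne']

theorem div_rpow_mul_rpow_sub_one {v w : ℝ} (hv : 0 < v) (hw : 0 < w) (a : ℝ) :
    (w / v) ^ a * v ^ (a - 1) = w ^ (a - 1) * (w / v) := by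
  rw [Real.rpow_sub_one hv.ne', Real.rpow_sub_one hw.ne', ← div_rpow_mul_rpow hv hw.le a]
  field_simp

theorem gb_satisfies_g1_general (p b : ℝ) (hb : 0 ≤ b) :
    ∀ v w : ℝ, 0 < v → v ≤ w →
      (w / v) ^ (p - 1) * gb p b v ≤ gb p b w ∧
      gb p b w ≤ (w / v) ^ p * gb p b v := by
  intro v w hv hvw
  have hw : 0 < w := hv.trans_le hvw
  unfold gb
  constructor
  · rw [← mul_assoc, div_rpow_mul_rpow hv hw.le]
    gcongr
  · rw [← mul_assoc, div_rpow_mul_rpow_sub_one hv hw, mul_assoc]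
    gcongr
    exact one_add_log_one_add_mul_le_div_mul hb hv hvw

theorem gb_satisfies_g1 (p b : ℝ) (hp : 1 < p) (hb : 0 ≤ b) :
    ∀ v w : ℝ, 0 < v → v ≤ w →
      (w / v) ^ (p - 1) * gb p b v ≤ gb p b w ∧
      gb p b w ≤ (w / v) ^ p * gb p b v :=
  gb_satisfies_g1_general p b hb
end
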